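/- Let M ≥ 1 and let P be a real symmetric M×M matrix admitting an orthonormal eigenbasis u_1, …, u_M of ℝ^M with eigenvalues λ_1 = 1, λ_2, …, λ_M, where u_1 = (1/√M)·𝟙 (𝟙 the all-ones vector) and |λ_p| < 1 for all p ≥ 2. Then for every t ≥ 1, every sequence ζ(1), …, ζ(t) of vectors in {0,1}^M, and every coordinate m ∈ {1, …, M}: | ( Σ_{s=1}^t P^{t+1−s} ζ(s) )_m − (1/M)·Σ_{s=1}^t Σ_{i=1}^M ζ(s)_i | ≤ √M · Σ_{p=2}^M |λ_p| / (1 − |λ_p|). -/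

import Mathlib

open Finset

/-!
In the eigenbasis, the mode of eigenvalue `1` of the running-consensus estimate is exactly the
network average, so the error consists of the remaining modes. The mode of eigenvalue `μ` is a
geometrically damped sum of the components of the inputs, of norm at most `B * (‖μ‖ / (1 - ‖μ‖))`
when the inputs have norm at most `B`. Vectors with entries in `[-1, 1]` have Euclidean norm at most
`√M`, and the Euclidean norm dominates every coordinate.
-/

section DampedSums

lemma sum_Icc_pow_succ_sub_le {K : Type*} [Field K] [LinearOrder K] [IsStrictOrderedRing K]
    {r : K} (hr₀ : 0 ≤ r) (hr₁ : r < 1) (t : ℕ) :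
    ∑ s ∈ Icc 1 t, r ^ (t + 1 - s) ≤ r / (1 - r) := by
  calc ∑ s ∈ Icc 1 t, r ^ (t + 1 - s)
      = ∑ k ∈ Ico 1 (t + 1), r ^ k := by
        simpa [← Ico_add_one_right_eq_Icc] using
          sum_Ico_reflect (fun k ↦ r ^ k) 1 (Nat.le_succ (t + 1))
    _ ≤ r / (1 - r) := by simpa using geom_sum_Ico_le_of_lt_one (m := 1) (n := t + 1) hr₀ hr₁

lemma norm_sum_pow_smul_le {R E : Type*} [SeminormedRing R] [SeminormedAddCommGroup E]
    [Module R E] [IsBoundedSMul R E] {r : R} (hr : ‖r‖ < 1) {x : ℕ → E} {B : ℝ}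
    (hx : ∀ s, ‖x s‖ ≤ B) (t : ℕ) :
    ‖∑ s ∈ Icc 1 t, r ^ (t + 1 - s) • x s‖ ≤ B * (‖r‖ / (1 - ‖r‖)) := by
  have hB : 0 ≤ B := (norm_nonneg _).trans (hx 0)
  have hterm : ∀ s ∈ Icc 1 t, ‖r ^ (t + 1 - s) • x s‖ ≤ B * ‖r‖ ^ (t + 1 - s) := by
    intro s hs
    have hpos : 0 < t + 1 - s := by grind
    calc ‖r ^ (t + 1 - s) • x s‖
        ≤ ‖r ^ (t + 1 - s)‖ * ‖x s‖ := norm_smul_le _ _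
      _ ≤ ‖r‖ ^ (t + 1 - s) * B := by
        gcongr
        exacts [norm_pow_le' r hpos, hx s]
      _ = B * ‖r‖ ^ (t + 1 - s) := mul_comm _ _
  calc ‖∑ s ∈ Icc 1 t, r ^ (t + 1 - s) • x s‖
      ≤ ∑ s ∈ Icc 1 t, B * ‖r‖ ^ (t + 1 - s) := norm_sum_le_of_le _ hterm
    _ = B * ∑ s ∈ Icc 1 t, ‖r‖ ^ (t + 1 - s) := (mul_sum ..).symm
    _ ≤ B * (‖r‖ / (1 - ‖r‖)) :=
      mul_le_mul_of_nonneg_left (sum_Icc_pow_succ_sub_le (norm_nonneg r) hr t) hB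

end DampedSums

section Eigenbasis

lemma pow_apply_eq_sum_eigenbasis {ι R V : Type*} [Fintype ι] [CommRing R] [AddCommGroup V]
    [Module R V] {T : Module.End R V} (b : Module.Basis ι R V) {μ : ι → R}
    (hT : ∀ p, T.HasEigenvector (μ p) (b p)) (n : ℕ) (x : V) :
    (T ^ n) x = ∑ p, μ p ^ n • b.repr x p • b p := by
  conv_lhs => rw [← b.sum_repr x, map_sum]
  refine sum_congr rfl fun p _ ↦ ?_
  rw [map_smul, (hT p).pow_apply, smul_comm]

variable {ι 𝕜 E : Type*} [Fintype ι] [RCLike 𝕜] [NormedAddCommGroup E] [InnerProductSpace 𝕜 E]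

lemma exists_orthonormalBasis_coe_eq [FiniteDimensional 𝕜 E] {v : ι → E} (hv : Orthonormal 𝕜 v)
    (hcard : Fintype.card ι = Module.finrank 𝕜 E) : ∃ b : OrthonormalBasis ι 𝕜 E, ⇑b = v :=
  ⟨.mk hv (hv.linearIndependent.span_eq_top_of_card_eq_finrank' hcard).ge,
    OrthonormalBasis.coe_mk ..⟩

variable [DecidableEq ι] {T : Module.End 𝕜 E} (b : OrthonormalBasis ι 𝕜 E) {μ : ι → 𝕜} {i₀ : ι}

lemma pow_apply_sub_inner_smul (hT : ∀ p, T.HasEigenvector (μ p) (b p)) (hμ₀ : μ i₀ = 1)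
    (n : ℕ) (x : E) :
    (T ^ n) x - inner 𝕜 (b i₀) x • b i₀
      = ∑ p ∈ univ.erase i₀, μ p ^ n • inner 𝕜 (b p) x • b p := by
  have hexpand : (T ^ n) x = ∑ p, μ p ^ n • inner 𝕜 (b p) x • b p := by
    simpa [b.repr_apply_apply] using pow_apply_eq_sum_eigenbasis b.toBasis (by simpa using hT) n x
  rw [hexpand, ← add_sum_erase _ _ (mem_univ i₀), hμ₀, one_pow, one_smul, add_sub_cancel_left]

theorem norm_sum_pow_apply_sub_le (hT : ∀ p, T.HasEigenvector (μ p) (b p)) (hμ₀ : μ i₀ = 1)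
    (hμ : ∀ p, p ≠ i₀ → ‖μ p‖ < 1) {x : ℕ → E} {B : ℝ} (hx : ∀ s, ‖x s‖ ≤ B) (t : ℕ) :
    ‖∑ s ∈ Icc 1 t, ((T ^ (t + 1 - s)) (x s) - inner 𝕜 (b i₀) (x s) • b i₀)‖
      ≤ B * ∑ p ∈ univ.erase i₀, ‖μ p‖ / (1 - ‖μ p‖) := by
  have hcomponent : ∀ p s, ‖inner 𝕜 (b p) (x s) • b p‖ ≤ B := fun p s ↦ by
    calc ‖inner 𝕜 (b p) (x s) • b p‖ = ‖inner 𝕜 (b p) (x s)‖ := by simp [norm_smul]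
      _ ≤ ‖b p‖ * ‖x s‖ := norm_inner_le_norm _ _
      _ ≤ B := by simpa using hx s
  simp only [pow_apply_sub_inner_smul b hT hμ₀]
  rw [sum_comm, mul_sum]
  exact norm_sum_le_of_le _ fun p hp ↦
    norm_sum_pow_smul_le (hμ p (ne_of_mem_erase hp)) (hcomponent p) t

end Eigenbasis

section Coordinates

variable {ι : Type*} [Fintype ι]

lemma euclideanSpace_norm_le_sqrt_card {𝕜 : Type*} [RCLike 𝕜] {x : EuclideanSpace 𝕜 ι}
    (hx : ∀ i, ‖x i‖ ≤ 1) : ‖x‖ ≤ √(Fintype.card ι) := by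
  rw [EuclideanSpace.norm_eq]
  refine Real.sqrt_le_sqrt ?_
  calc ∑ i, ‖x i‖ ^ 2 ≤ ∑ _i : ι, (1 : ℝ) :=
        sum_le_sum fun i _ ↦ pow_le_one₀ (norm_nonneg _) (hx i)
    _ = Fintype.card ι := by simp

lemma inner_smul_inv_sqrt_card_apply (x : EuclideanSpace ℝ ι) {v : EuclideanSpace ℝ ι}
    (hv : ∀ i, v i = 1 / √(Fintype.card ι)) (m : ι) :
    (inner ℝ v x • v) m = 1 / (Fintype.card ι : ℝ) * ∑ i, x i := by
  have hsq : 1 / √(Fintype.card ι : ℝ) * (1 / √(Fintype.card ι)) = 1 / (Fintype.card ι : ℝ) := by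
    rw [div_mul_div_comm, Real.mul_self_sqrt (Nat.cast_nonneg _), one_mul]
  have hinner : inner ℝ v x = 1 / √(Fintype.card ι : ℝ) * ∑ i, x i := by
    simp only [PiLp.inner_apply, hv, mul_sum, RCLike.inner_apply', conj_trivial]
  rw [PiLp.smul_apply, smul_eq_mul, hinner, hv, mul_right_comm, hsq]

variable [DecidableEq ι]

lemma exists_orthonormalBasis_hasEigenvector {P : Matrix ι ι ℝ} {u : ι → ι → ℝ} {lam : ι → ℝ}
    (horth : ∀ p q, u p ⬝ᵥ u q = if p = q then (1 : ℝ) else 0)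
    (heig : ∀ p, P.mulVec (u p) = lam p • u p) :
    ∃ b : OrthonormalBasis ι ℝ (EuclideanSpace ℝ ι), (∀ p, (b p).ofLp = u p) ∧
      ∀ p, Module.End.HasEigenvector (Matrix.toLpLin 2 2 P) (lam p) (b p) := by
  have hv : Orthonormal ℝ fun p ↦ WithLp.toLp 2 (u p) := by
    rw [orthonormal_iff_ite]
    intro p q
    rw [EuclideanSpace.inner_toLp_toLp, star_trivial, dotProduct_comm, horth]
  obtain ⟨b, hb⟩ := exists_orthonormalBasis_coe_eq hv (by simp)
  refine ⟨b, fun p ↦ by rw [hb], fun p ↦ ?_⟩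
  rw [Module.End.hasEigenvector_iff, Module.End.mem_eigenspace_iff]
  exact ⟨by simp [hb, Matrix.toLpLin_toLp, heig], b.orthonormal.ne_zero p⟩

theorem running_consensus_error_bound_general (P : Matrix ι ι ℝ) (u : ι → ι → ℝ) (lam : ι → ℝ)
    (horth : ∀ p q, u p ⬝ᵥ u q = if p = q then (1 : ℝ) else 0)
    (heig : ∀ p, P.mulVec (u p) = lam p • u p) (i₀ : ι)
    (hu₀ : u i₀ = fun _ ↦ 1 / √(Fintype.card ι)) (hlam₀ : lam i₀ = 1)
    (hlam : ∀ p, p ≠ i₀ → |lam p| < 1) (t : ℕ) (ζ : ℕ → ι → ℝ) (hζ : ∀ s i, |ζ s i| ≤ 1)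
    (m : ι) :
    |(∑ s ∈ Icc 1 t, (P ^ (t + 1 - s)).mulVec (ζ s)) m
        - 1 / (Fintype.card ι : ℝ) * ∑ s ∈ Icc 1 t, ∑ i, ζ s i|
      ≤ √(Fintype.card ι) * ∑ p ∈ univ.erase i₀, |lam p| / (1 - |lam p|) := by
  obtain ⟨b, hbu, hb⟩ := exists_orthonormalBasis_hasEigenvector horth heig
  let x : ℕ → EuclideanSpace ℝ ι := fun s ↦ WithLp.toLp 2 (ζ s)
  let error : EuclideanSpace ℝ ι := ∑ s ∈ Icc 1 t,
    ((Matrix.toLpLin 2 2 P ^ (t + 1 - s)) (x s) - inner ℝ (b i₀) (x s) • b i₀)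
  have hx : ∀ s, ‖x s‖ ≤ √(Fintype.card ι) := fun s ↦ euclideanSpace_norm_le_sqrt_card (hζ s)
  have herror : (∑ s ∈ Icc 1 t, (P ^ (t + 1 - s)).mulVec (ζ s)) m
      - 1 / (Fintype.card ι : ℝ) * ∑ s ∈ Icc 1 t, ∑ i, ζ s i = error m := by
    have hmean := fun s ↦ inner_smul_inv_sqrt_card_apply (x s) (v := b i₀) (by simp [hbu, hu₀]) m
    simp only [error, WithLp.ofLp_sum, Finset.sum_apply, PiLp.sub_apply, hmean, sum_sub_distrib,
      mul_sum, ← Matrix.toLpLin_pow, Matrix.ofLp_toLpLin, Matrix.toLin'_apply, x]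
  rw [herror]
  exact (PiLp.norm_apply_le error m).trans (norm_sum_pow_apply_sub_le b hb hlam₀ hlam hx t)

end Coordinates

/-- Running-consensus estimation error bound: if `P` is a real symmetric `M × M` matrix
with orthonormal eigenbasis `u_1, ..., u_M`, eigenvalues `λ_1 = 1, λ_2, ..., λ_M` with
`|λ_p| < 1` for `p ≥ 2`, and `u_1 = 𝟙/√M`, then for every `t ≥ 1`, every sequence
`ζ(1), ..., ζ(t)` of `{0,1}`-vectors and every coordinate `m`, the running-consensus
estimate `(Σ_{s=1}^t P^{t+1-s} ζ(s))_m` deviates from the network average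
`(1/M) Σ_{s=1}^t Σ_i ζ(s)_i` by at most `√M · Σ_{p≥2} |λ_p|/(1 - |λ_p|)`. -/
theorem running_consensus_error_bound
    (M : ℕ) (hM : 0 < M) (P : Matrix (Fin M) (Fin M) ℝ) (hsymm : P.IsSymm)
    (u : Fin M → (Fin M → ℝ)) (lam : Fin M → ℝ)
    (horth : ∀ p q, (∑ i, u p i * u q i) = if p = q then (1 : ℝ) else 0)
    (heig : ∀ p, P.mulVec (u p) = lam p • u p)
    (hu0 : u ⟨0, hM⟩ = fun _ => 1 / Real.sqrt M)
    (hlam0 : lam ⟨0, hM⟩ = 1)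
    (hlam : ∀ p, p ≠ (⟨0, hM⟩ : Fin M) → |lam p| < 1)
    (t : ℕ) (ht : 1 ≤ t)
    (ζ : ℕ → Fin M → ℝ) (hζ : ∀ s i, ζ s i = 0 ∨ ζ s i = 1)
    (m : Fin M) :
    |(∑ s ∈ Finset.Icc 1 t, (P ^ (t + 1 - s)).mulVec (ζ s)) m
        - (1 / (M : ℝ)) * ∑ s ∈ Finset.Icc 1 t, ∑ i, ζ s i|
      ≤ Real.sqrt M * ∑ p ∈ Finset.univ.erase (⟨0, hM⟩ : Fin M), |lam p| / (1 - |lam p|) := by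
  simpa using running_consensus_error_bound_general P u lam horth heig ⟨0, hM⟩ (by simpa using hu0)
    hlam0 hlam t ζ (fun s i ↦ by rcases hζ s i with h | h <;> simp [h]) m
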